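/- arXiv:2202.08178 — 2 statements merged into one kernel-verified Lean document; each statement's English description precedes it below -/
import Mathlib

section
/- Characterization of strict dissipativity with a quadratic storage function (Corollary 4.10): Assume there exists c_K > 0 such that ‖Ku‖ ≥ c_K‖Bu‖ for all u ∈ U, and let (x_e,u_e) be a controlled equilibrium. Then there exist a bounded self-adjoint operator P on H, w ∈ H and α of class 𝒦 such that the quadratic function V_{P,w}(x) = ⟨Px,x⟩ + 2Re⟨w,x⟩ is bounded from below and 2Re⟨Ax + Bu, Px + w⟩ ≤ ℓ(x,u) − ℓ(x_e,u_e) − α(‖x − x_e‖) for all x ∈ dom A, u ∈ U, if and only if there exist a bounded non-negative self-adjoint operator Q on H and m > 0 such that (a) there exists w̃ ∈ dom A* ∩ ran Q^{1/2} with A*w̃ = z + C*C x_e and B*w̃ = v + K*K u_e, and (b) ‖Cx‖² − 2Re⟨Ax, Qx⟩ ≥ m‖x‖² for all x ∈ dom A. -/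
open scoped InnerProductSpace
open RCLike ContinuousLinearMap

/-- A function of class `𝒦`: continuous, strictly increasing on `[0,∞)` with `α 0 = 0`. -/
def IsClassK (α : ℝ → ℝ) : Prop :=
  ContinuousOn α (Set.Ici 0) ∧ StrictMonoOn α (Set.Ici 0) ∧ α 0 = 0

/-- The generalized linear-quadratic stage cost
`ℓ(x,u) = ‖Cx‖² + ‖Ku‖² + 2Re⟨z,x⟩ + 2Re⟨v,u⟩`. -/
noncomputable def ell {𝕜 H U Y Z : Type*} [RCLike 𝕜]
    [NormedAddCommGroup H] [InnerProductSpace 𝕜 H]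
    [NormedAddCommGroup U] [InnerProductSpace 𝕜 U]
    [NormedAddCommGroup Y] [InnerProductSpace 𝕜 Y]
    [NormedAddCommGroup Z] [InnerProductSpace 𝕜 Z]
    (C : H →L[𝕜] Y) (K : U →L[𝕜] Z) (z : H) (v : U) (x : H) (u : U) : ℝ :=
  ‖C x‖ ^ 2 + ‖K u‖ ^ 2 + 2 * re ⟪z, x⟫_𝕜 + 2 * re ⟪v, u⟫_𝕜

/-- `w` lies in the range of `Q^{1/2}`, the (unique) non-negative self-adjoint square
root of the non-negative self-adjoint operator `Q`, expressed via the existence of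
such a square root. -/
def MemRanSqrt {𝕜 H : Type*} [RCLike 𝕜]
    [NormedAddCommGroup H] [InnerProductSpace 𝕜 H] [CompleteSpace H]
    (Q : H →L[𝕜] H) (w : H) : Prop :=
  ∃ R : H →L[𝕜] H, IsSelfAdjoint R ∧ (∀ x : H, 0 ≤ re ⟪R x, x⟫_𝕜) ∧
    R.comp R = Q ∧ w ∈ Set.range R

/-!
Shifting the equilibrium to the origin splits the dissipation inequality into a form that is
homogeneous of degree two and a linear functional. A linear functional dominated by a degree-two
form vanishes, so the inequality says exactly that `P xₑ + w` solves the adjoint equations of (a)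
and that the form dominates `α ‖·‖`. By homogeneity the latter, with the control set to zero,
yields (b) with `m = α 1`. Conversely, (b) for `Q` makes the form of `λ Q` coercive for small
`λ > 0`, since `‖K u‖ ≥ c_K ‖B u‖` absorbs the mixed term.

Boundedness from below of `V_{P,w}` means `P ≥ 0` and `|⟨w, x⟩|² ≤ c ⟨P x, x⟩`, which by Douglas'
range inclusion argument is `w ∈ ran P^{1/2}`. The square root is obtained simultaneously over `ℝ`
and `ℂ` from `√(1 - 4 t) = 1 - 2 ∑ₙ Cₙ t^(n+1)` with the Catalan numbers `Cₙ`; this series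
converges absolutely up to the boundary `‖t‖ = 1/4`.
-/

section CatalanSum

theorem sum_range_catalan_div_four_pow (N : ℕ) :
    ∑ n ∈ Finset.range N, (catalan n : ℝ) / 4 ^ (n + 1) = (1 - N.centralBinom / 4 ^ N) / 2 := by
  induction N with
  | zero => simp
  | succ N ih =>
    have h_catalan : ((N : ℝ) + 1) * catalan N = N.centralBinom := by
      exact_mod_cast succ_mul_catalan_eq_centralBinom N
    have h_centralBinom :
        ((N : ℝ) + 1) * (N + 1).centralBinom = 2 * (2 * N + 1) * N.centralBinom := by
      exact_mod_cast Nat.succ_mul_centralBinom_succ N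
    have h_step : ((N + 1).centralBinom : ℝ) = 2 * (2 * N + 1) * catalan N := by
      refine mul_left_cancel₀ (Nat.cast_add_one_ne_zero N : (N : ℝ) + 1 ≠ 0) ?_
      rw [h_centralBinom, ← h_catalan]
      ring
    rw [Finset.sum_range_succ, ih, h_step, ← h_catalan]
    field_simp
    ring

theorem sum_range_catalan_div_four_pow_le (N : ℕ) :
    ∑ n ∈ Finset.range N, (catalan n : ℝ) / 4 ^ (n + 1) ≤ 1 / 2 := by
  have : (0 : ℝ) ≤ N.centralBinom / 4 ^ N := by positivity
  linarith [sum_range_catalan_div_four_pow N]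

theorem summable_catalan_div_four_pow : Summable fun n ↦ (catalan n : ℝ) / 4 ^ (n + 1) :=
  summable_of_sum_range_le (fun _ ↦ by positivity) sum_range_catalan_div_four_pow_le

variable {E : Type*} [NormedRing E]

/-- The sum `∑ₙ Cₙ t^(n+1)` over the Catalan numbers `Cₙ`, i.e. `(1 - √(1 - 4 t)) / 2`; it
converges for `‖t‖ ≤ 1/4` in a complete normed ring. -/
noncomputable def catalanSum (t : E) : E := ∑' n, catalan n • t ^ (n + 1)

theorem norm_catalan_smul_pow_le {t : E} (ht : ‖t‖ ≤ 1 / 4) (n : ℕ) :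
    ‖catalan n • t ^ (n + 1)‖ ≤ catalan n / 4 ^ (n + 1) :=
  calc ‖catalan n • t ^ (n + 1)‖ ≤ catalan n * ‖t ^ (n + 1)‖ := norm_nsmul_le
    _ ≤ catalan n * (1 / 4) ^ (n + 1) := by
      gcongr
      exact (norm_pow_le' t n.succ_pos).trans (by gcongr)
    _ = catalan n / 4 ^ (n + 1) := by rw [one_div_pow, mul_one_div]

theorem norm_catalanSum_le {t : E} (ht : ‖t‖ ≤ 1 / 4) : ‖catalanSum t‖ ≤ 1 / 2 :=
  (tsum_of_norm_bounded summable_catalan_div_four_pow.hasSum (norm_catalan_smul_pow_le ht)).trans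
    (Real.tsum_le_of_sum_range_le (fun _ ↦ by positivity) sum_range_catalan_div_four_pow_le)

theorem isSelfAdjoint_catalanSum [StarRing E] [ContinuousStar E] {t : E} (ht : IsSelfAdjoint t) :
    IsSelfAdjoint (catalanSum t) := by
  rw [isSelfAdjoint_iff, catalanSum, tsum_star]
  simp only [star_nsmul, star_pow, ht.star_eq]

variable [CompleteSpace E]

theorem catalanSum_eq_add_mul_self {t : E} (ht : ‖t‖ ≤ 1 / 4) :
    catalanSum t = t + catalanSum t * catalanSum t := by
  have h_norm : Summable fun n ↦ ‖catalan n • t ^ (n + 1)‖ :=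
    summable_catalan_div_four_pow.of_nonneg_of_le (fun _ ↦ norm_nonneg _)
      (norm_catalan_smul_pow_le ht)
  have h_coeff (n : ℕ) : catalan (n + 1) • t ^ (n + 2) =
      ∑ kl ∈ Finset.HasAntidiagonal.antidiagonal n,
        catalan kl.1 • t ^ (kl.1 + 1) * catalan kl.2 • t ^ (kl.2 + 1) := by
    rw [catalan_succ', Finset.sum_smul]
    refine Finset.sum_congr rfl fun kl hkl ↦ ?_
    rw [smul_mul_smul_comm, ← pow_add, ← Finset.HasAntidiagonal.mem_antidiagonal.1 hkl]
    congr 2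
    ring
  have h_mul : catalanSum t * catalanSum t = ∑' n, catalan (n + 1) • t ^ (n + 2) := by
    simp only [h_coeff]
    exact tsum_mul_tsum_eq_tsum_sum_antidiagonal_of_summable_norm h_norm h_norm
  rw [h_mul, catalanSum, h_norm.of_norm.tsum_eq_zero_add]
  simp only [catalan_zero, one_smul, zero_add, pow_one, add_assoc, Nat.reduceAdd]

theorem one_sub_two_smul_catalanSum_mul_self {t : E} (ht : ‖t‖ ≤ 1 / 4) :
    (1 - 2 • catalanSum t) * (1 - 2 • catalanSum t) = 1 - 4 • t := by
  have h_fix : t = catalanSum t - catalanSum t * catalanSum t :=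
    eq_sub_of_add_eq (catalanSum_eq_add_mul_self ht).symm
  nth_rw 3 [h_fix]
  noncomm_ring

end CatalanSum

section SquareRoot

variable {𝕜 H : Type*} [RCLike 𝕜] [NormedAddCommGroup H] [InnerProductSpace 𝕜 H]

theorem re_inner_one_sub_apply (T : H →L[𝕜] H) (x : H) :
    re ⟪(1 - T) x, x⟫_𝕜 = ‖x‖ ^ 2 - re ⟪T x, x⟫_𝕜 := by
  rw [sub_apply, one_apply_eq_self, inner_sub_left, map_sub, inner_self_eq_norm_sq]

theorem re_inner_apply_self_le_of_norm_le_one {T : H →L[𝕜] H} (hT : ‖T‖ ≤ 1) (x : H) :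
    re ⟪T x, x⟫_𝕜 ≤ ‖x‖ ^ 2 :=
  calc re ⟪T x, x⟫_𝕜 ≤ ‖T x‖ * ‖x‖ := re_inner_le_norm _ _
    _ ≤ ‖x‖ * ‖x‖ := by gcongr; exact T.le_of_opNorm_le_of_le hT le_rfl |>.trans_eq (one_mul _)
    _ = ‖x‖ ^ 2 := (sq _).symm

theorem norm_one_sub_le_one_of_isPositive {T : H →L[𝕜] H} (hT : T.IsPositive) (hT1 : ‖T‖ ≤ 1) :
    ‖1 - T‖ ≤ 1 := by
  have h_symm : (1 - T).IsSymmetric := LinearMap.IsSymmetric.id.sub hT.isSymmetric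
  rw [norm_eq_iSup_rayleighQuotient (1 - T) h_symm]
  refine ciSup_le fun x ↦ ?_
  have h_nonneg : 0 ≤ re ⟪T x, x⟫_𝕜 := hT.re_inner_nonneg_left x
  have h_le : re ⟪T x, x⟫_𝕜 ≤ ‖x‖ ^ 2 := re_inner_apply_self_le_of_norm_le_one hT1 x
  rw [rayleighQuotient, reApplyInnerSelf_apply, re_inner_one_sub_apply,
    abs_of_nonneg (div_nonneg (by linarith) (by positivity))]
  exact div_le_one_of_le₀ (by linarith) (by positivity)

variable [CompleteSpace H]

theorem isPositive_one_sub_of_norm_le_one {T : H →L[𝕜] H} (hT : IsSelfAdjoint T) (hT1 : ‖T‖ ≤ 1) :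
    (1 - T).IsPositive := by
  refine isPositive_def'.2 ⟨(IsSelfAdjoint.one _).sub hT, fun x ↦ ?_⟩
  rw [reApplyInnerSelf_apply, re_inner_one_sub_apply]
  exact sub_nonneg.2 (re_inner_apply_self_le_of_norm_le_one hT1 x)

theorem exists_isPositive_mul_self_of_norm_le_one {Q : H →L[𝕜] H} (hQ : Q.IsPositive)
    (hQ1 : ‖Q‖ ≤ 1) : ∃ R : H →L[𝕜] H, R.IsPositive ∧ R * R = Q := by
  set t : H →L[𝕜] H := ((4⁻¹ : ℝ) : 𝕜) • (1 - Q) with ht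
  have ht_norm : ‖t‖ ≤ 1 / 4 := by
    rw [ht, norm_smul, norm_ofReal, abs_of_nonneg (by norm_num)]
    linarith [norm_one_sub_le_one_of_isPositive hQ hQ1]
  have ht_selfAdjoint : IsSelfAdjoint t :=
    IsSelfAdjoint.smul (conj_ofReal _) ((IsSelfAdjoint.one _).sub hQ.isSelfAdjoint)
  have h_four_smul : 4 • t = 1 - Q := by
    rw [ht, ← Nat.cast_smul_eq_nsmul 𝕜, smul_smul, ← ofReal_natCast, ← ofReal_mul]
    norm_num
  refine ⟨1 - 2 • catalanSum t, isPositive_one_sub_of_norm_le_one ?_ ?_, ?_⟩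
  · rw [two_smul]
    exact (isSelfAdjoint_catalanSum ht_selfAdjoint).add (isSelfAdjoint_catalanSum ht_selfAdjoint)
  · calc ‖2 • catalanSum t‖ ≤ (2 : ℕ) * ‖catalanSum t‖ := norm_nsmul_le
      _ ≤ (2 : ℕ) * (1 / 2) := by gcongr; exact norm_catalanSum_le ht_norm
      _ = 1 := by norm_num
  · rw [one_sub_two_smul_catalanSum_mul_self ht_norm, h_four_smul, sub_sub_cancel]

theorem exists_isPositive_mul_self {Q : H →L[𝕜] H} (hQ : Q.IsPositive) :
    ∃ R : H →L[𝕜] H, R.IsPositive ∧ R * R = Q := by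
  rcases eq_or_ne Q 0 with rfl | hQ0
  · exact ⟨0, isPositive_zero, mul_zero 0⟩
  have h_norm : ‖Q‖ ≠ 0 := norm_ne_zero_iff.2 hQ0
  have h_scaled : ‖((‖Q‖⁻¹ : ℝ) : 𝕜) • Q‖ ≤ 1 := by
    rw [norm_smul, norm_ofReal, abs_of_nonneg (by positivity), inv_mul_cancel₀ h_norm]
  obtain ⟨R, hR, hRR⟩ := exists_isPositive_mul_self_of_norm_le_one
    (hQ.smul_of_nonneg (ofReal_nonneg.2 (by positivity))) h_scaled
  refine ⟨((√‖Q‖ : ℝ) : 𝕜) • R, hR.smul_of_nonneg (ofReal_nonneg.2 (Real.sqrt_nonneg _)), ?_⟩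
  rw [smul_mul_smul_comm, hRR, smul_smul, ← ofReal_mul, ← ofReal_mul,
    Real.mul_self_sqrt (norm_nonneg Q), mul_inv_cancel₀ h_norm, ofReal_one, one_smul]

end SquareRoot

section RangeOfSquareRoot

variable {𝕜 E F H : Type*} [RCLike 𝕜]
  [NormedAddCommGroup E] [InnerProductSpace 𝕜 E] [CompleteSpace E]
  [NormedAddCommGroup F] [InnerProductSpace 𝕜 F] [CompleteSpace F]
  [NormedAddCommGroup H] [InnerProductSpace 𝕜 H] [CompleteSpace H]

theorem mem_range_adjoint_of_norm_inner_le (T : E →L[𝕜] F) {w : E} {c : ℝ}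
    (h : ∀ x, ‖⟪w, x⟫_𝕜‖ ≤ c * ‖T x‖) : w ∈ Set.range (adjoint T) := by
  have h_ker : innerₛₗ 𝕜 w ∈ (LinearMap.ker (T : E →ₗ[𝕜] F)).dualAnnihilator := by
    refine (Submodule.mem_dualAnnihilator _).2 fun x hx ↦ norm_le_zero_iff.1 ?_
    simpa [show T x = 0 from hx] using h x
  rw [← LinearMap.range_dualMap_eq_dualAnnihilator_ker] at h_ker
  obtain ⟨f, hf⟩ := h_ker
  have hf_apply (x : E) : f (T x) = ⟪w, x⟫_𝕜 := LinearMap.congr_fun hf x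
  have hf_bound (y : LinearMap.range (T : E →ₗ[𝕜] F)) : ‖f.domRestrict _ y‖ ≤ c * ‖y‖ := by
    obtain ⟨_, x, rfl⟩ := y
    simpa [hf_apply] using h x
  obtain ⟨g, hg, -⟩ := exists_extension_norm_eq _ ((f.domRestrict _).mkContinuous c hf_bound)
  refine ⟨(InnerProductSpace.toDual 𝕜 F).symm g, ext_inner_right 𝕜 fun x ↦ ?_⟩
  rw [adjoint_inner_left, InnerProductSpace.toDual_symm_apply, ← hf_apply x]
  exact hg ⟨T x, x, rfl⟩

theorem mem_range_adjoint_iff_exists_norm_inner_le (T : E →L[𝕜] F) (w : E) :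
    w ∈ Set.range (adjoint T) ↔ ∃ c : ℝ, ∀ x, ‖⟪w, x⟫_𝕜‖ ≤ c * ‖T x‖ := by
  refine ⟨?_, fun ⟨_, h⟩ ↦ mem_range_adjoint_of_norm_inner_le T h⟩
  rintro ⟨r, rfl⟩
  exact ⟨‖r‖, fun x ↦ by rw [adjoint_inner_left]; exact norm_inner_le_norm _ _⟩

theorem re_inner_comp_self_apply {R : H →L[𝕜] H} (hR : IsSelfAdjoint R) (x : H) :
    re ⟪R (R x), x⟫_𝕜 = ‖R x‖ ^ 2 := by
  rw [← adjoint_inner_right, hR.adjoint_eq, inner_self_eq_norm_sq]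

theorem memRanSqrt_iff_exists_sq_norm_inner_le {P : H →L[𝕜] H} (hP : P.IsPositive) (w : H) :
    MemRanSqrt P w ↔ ∃ c : ℝ, ∀ x, ‖⟪w, x⟫_𝕜‖ ^ 2 ≤ c * re ⟪P x, x⟫_𝕜 := by
  constructor
  · rintro ⟨R, hR, -, rfl, hw⟩
    rw [← hR.adjoint_eq, mem_range_adjoint_iff_exists_norm_inner_le] at hw
    obtain ⟨c, hc⟩ := hw
    refine ⟨c ^ 2, fun x ↦ ?_⟩
    rw [ContinuousLinearMap.comp_apply, re_inner_comp_self_apply hR, ← mul_pow]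
    exact pow_le_pow_left₀ (norm_nonneg _) (hc x) 2
  · rintro ⟨c, hc⟩
    obtain ⟨R, hR, rfl⟩ := exists_isPositive_mul_self hP
    refine ⟨R, hR.isSelfAdjoint, hR.re_inner_nonneg_left, rfl, ?_⟩
    rw [← hR.isSelfAdjoint.adjoint_eq, mem_range_adjoint_iff_exists_norm_inner_le]
    refine ⟨√c, fun x ↦ ?_⟩
    rw [← Real.sqrt_sq (norm_nonneg (R x)), ← Real.sqrt_mul' _ (sq_nonneg _),
      ← re_inner_comp_self_apply hR.isSelfAdjoint]
    exact Real.le_sqrt_of_sq_le (hc x)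

theorem MemRanSqrt.apply_add {P : H →L[𝕜] H} {w : H} (hw : MemRanSqrt P w) (x : H) :
    MemRanSqrt P (P x + w) := by
  obtain ⟨R, hR, hR0, rfl, r, rfl⟩ := hw
  exact ⟨R, hR, hR0, rfl, R x + r, map_add R _ _⟩

theorem MemRanSqrt.smul_left {P : H →L[𝕜] H} (hP : P.IsPositive) {w : H} (hw : MemRanSqrt P w)
    {c : ℝ} (hc : 0 < c) : MemRanSqrt ((c : 𝕜) • P) w := by
  obtain ⟨b, hb⟩ := (memRanSqrt_iff_exists_sq_norm_inner_le hP w).1 hw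
  refine (memRanSqrt_iff_exists_sq_norm_inner_le
    (hP.smul_of_nonneg (ofReal_nonneg.2 hc.le)) w).2 ⟨b / c, fun x ↦ (hb x).trans_eq ?_⟩
  rw [smul_apply, inner_smul_left, conj_ofReal, re_ofReal_mul]
  field_simp

end RangeOfSquareRoot

section BoundedBelow

variable {𝕜 H : Type*} [RCLike 𝕜] [NormedAddCommGroup H] [InnerProductSpace 𝕜 H]

theorem sq_re_inner_le_of_quadratic_bddBelow {P : H →L[𝕜] H} {w : H} {b : ℝ}
    (h : ∀ x, b ≤ re ⟪P x, x⟫_𝕜 + 2 * re ⟪w, x⟫_𝕜) {c : ℝ} (hc : -b ≤ c) (x : H) :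
    re ⟪w, x⟫_𝕜 ^ 2 ≤ c * re ⟪P x, x⟫_𝕜 := by
  have h_discrim : discrim (re ⟪P x, x⟫_𝕜) (2 * re ⟪w, x⟫_𝕜) c ≤ 0 := by
    refine discrim_le_zero fun t ↦ ?_
    have ht := h ((t : 𝕜) • x)
    simp only [map_smul, inner_smul_left, inner_smul_right, conj_ofReal, re_ofReal_mul] at ht
    linarith
  rw [discrim] at h_discrim
  linarith

theorem sq_norm_inner_le_of_sq_re_inner_le {P : H →L[𝕜] H} {w : H} {c : ℝ}
    (h : ∀ x, re ⟪w, x⟫_𝕜 ^ 2 ≤ c * re ⟪P x, x⟫_𝕜) (x : H) :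
    ‖⟪w, x⟫_𝕜‖ ^ 2 ≤ c * re ⟪P x, x⟫_𝕜 := by
  obtain ⟨a, ha, haw⟩ := exists_norm_eq_mul_self ⟪w, x⟫_𝕜
  have hax := h (a • x)
  rw [inner_smul_right, ← haw, ofReal_re, map_smul, inner_smul_left, inner_smul_right, ← mul_assoc,
    RCLike.conj_mul, ha] at hax
  simpa using hax

theorem quadratic_bddBelow_iff (P : H →L[𝕜] H) (w : H) :
    (∃ b : ℝ, ∀ x, b ≤ re ⟪P x, x⟫_𝕜 + 2 * re ⟪w, x⟫_𝕜) ↔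
      (∀ x, 0 ≤ re ⟪P x, x⟫_𝕜) ∧ ∃ c : ℝ, ∀ x, ‖⟪w, x⟫_𝕜‖ ^ 2 ≤ c * re ⟪P x, x⟫_𝕜 := by
  constructor
  · rintro ⟨b, hb⟩
    have h_pos : 0 < |b| + 1 := by positivity
    have h_sq := sq_re_inner_le_of_quadratic_bddBelow hb
      (show -b ≤ |b| + 1 by linarith [neg_le_abs b])
    exact ⟨fun x ↦ nonneg_of_mul_nonneg_right ((sq_nonneg _).trans (h_sq x)) h_pos,
      |b| + 1, sq_norm_inner_le_of_sq_re_inner_le h_sq⟩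
  · rintro ⟨hP, c, hc⟩
    refine ⟨-|c|, fun x ↦ ?_⟩
    have h_re : -‖⟪w, x⟫_𝕜‖ ≤ re ⟪w, x⟫_𝕜 := neg_le_of_abs_le (abs_re_le_norm _)
    have h_sq : ‖⟪w, x⟫_𝕜‖ ^ 2 ≤ |c| * re ⟪P x, x⟫_𝕜 :=
      (hc x).trans (mul_le_mul_of_nonneg_right (le_abs_self c) (hP x))
    have h_amgm : 2 * ‖⟪w, x⟫_𝕜‖ ≤ |c| + re ⟪P x, x⟫_𝕜 := by
      refine le_of_sq_le_sq ?_ (add_nonneg (abs_nonneg c) (hP x))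
      linarith [sq_nonneg (|c| - re ⟪P x, x⟫_𝕜)]
    linarith

theorem quadratic_bddBelow_iff_memRanSqrt [CompleteSpace H] {P : H →L[𝕜] H} (hP : IsSelfAdjoint P)
    (w : H) :
    (∃ b : ℝ, ∀ x, b ≤ re ⟪P x, x⟫_𝕜 + 2 * re ⟪w, x⟫_𝕜) ↔
      (∀ x, 0 ≤ re ⟪P x, x⟫_𝕜) ∧ MemRanSqrt P w := by
  rw [quadratic_bddBelow_iff]
  exact and_congr_right fun hP0 ↦
    (memRanSqrt_iff_exists_sq_norm_inner_le (isPositive_def'.2 ⟨hP, hP0⟩) w).symm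

end BoundedBelow

section Homogeneous

theorem nonpos_of_forall_pos_mul_le_sq_mul {a b : ℝ} (h : ∀ t : ℝ, 0 < t → t * a ≤ t ^ 2 * b) :
    a ≤ 0 := by
  have h_lim : Filter.Tendsto (fun t : ℝ ↦ t * b) (nhdsWithin 0 (Set.Ioi 0)) (nhds 0) :=
    ((continuous_mul_const b).tendsto' 0 0 (zero_mul b)).mono_left nhdsWithin_le_nhds
  refine ge_of_tendsto h_lim (eventually_mem_nhdsWithin.mono fun t ht ↦ ?_)
  refine le_of_mul_le_mul_left ((h t ht).trans_eq ?_) ht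
  ring

variable {𝕜 E : Type*} [RCLike 𝕜]

theorem linearMap_eq_zero_of_re_le_homogeneous [AddCommGroup E] [Module 𝕜 E] {f : E →ₗ[𝕜] 𝕜}
    {q : E → ℝ} (hq : ∀ (t : ℝ) (x : E), q ((t : 𝕜) • x) = t ^ 2 * q x)
    (h : ∀ x, re (f x) ≤ q x) : f = 0 := by
  have h_nonpos (x : E) : re (f x) ≤ 0 :=
    nonpos_of_forall_pos_mul_le_sq_mul fun t _ ↦ by simpa [hq] using h ((t : 𝕜) • x)
  ext x
  obtain ⟨a, -, ha⟩ := exists_norm_eq_mul_self (f x)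
  have h_norm := h_nonpos (a • x)
  rw [map_smul, smul_eq_mul, ← ha, ofReal_re] at h_norm
  exact norm_le_zero_iff.1 h_norm

theorem apply_one_mul_sq_norm_le_of_homogeneous [NormedAddCommGroup E] [NormedSpace 𝕜 E]
    {q : E → ℝ} (hq : ∀ (t : ℝ) (x : E), q ((t : 𝕜) • x) = t ^ 2 * q x) {α : ℝ → ℝ}
    (h : ∀ x, α ‖x‖ ≤ q x) (x : E) : α 1 * ‖x‖ ^ 2 ≤ q x := by
  rcases eq_or_ne x 0 with rfl | hx
  · have h_zero := hq 0 0
    simp_all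
  have hx' : 0 < ‖x‖ := norm_pos_iff.2 hx
  have h_unit := h (((‖x‖⁻¹ : ℝ) : 𝕜) • x)
  rwa [hq, norm_smul, norm_ofReal, abs_of_pos (inv_pos.2 hx'), inv_mul_cancel₀ hx'.ne', inv_pow,
    inv_mul_eq_div, le_div_iff₀ (by positivity)] at h_unit

end Homogeneous

section ClassK

theorem IsClassK.nonneg {α : ℝ → ℝ} (hα : IsClassK α) {s : ℝ} (hs : 0 ≤ s) : 0 ≤ α s :=
  hα.2.2 ▸ hα.2.1.monotoneOn Set.self_mem_Ici hs hs

theorem IsClassK.pos {α : ℝ → ℝ} (hα : IsClassK α) {s : ℝ} (hs : 0 < s) : 0 < α s :=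
  hα.2.2 ▸ hα.2.1 Set.self_mem_Ici hs.le hs

theorem isClassK_const_mul_sq {c : ℝ} (hc : 0 < c) : IsClassK fun s ↦ c * s ^ 2 := by
  refine ⟨by fun_prop, fun a ha b _ hab ↦ ?_, by simp⟩
  exact mul_lt_mul_of_pos_left (pow_lt_pow_left₀ hab ha two_ne_zero) hc

end ClassK

section Dissipation

variable {𝕜 H U Y Z : Type*} [RCLike 𝕜]
  [NormedAddCommGroup H] [InnerProductSpace 𝕜 H]
  [NormedAddCommGroup U] [InnerProductSpace 𝕜 U]
  [NormedAddCommGroup Y] [InnerProductSpace 𝕜 Y]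
  [NormedAddCommGroup Z] [InnerProductSpace 𝕜 Z]
  {A : H →ₗ.[𝕜] H} {B : U →L[𝕜] H} {C : H →L[𝕜] Y} {K : U →L[𝕜] Z}

/-- The purely quadratic part `‖Cx‖² + ‖Ku‖² - 2 Re⟨Ax + Bu, Px⟩` of the stage cost minus the
derivative of the storage function `V_{P,w}` along the dynamics, on pairs `s = (x, u)`. -/
noncomputable def dissipationForm (A : H →ₗ.[𝕜] H) (B : U →L[𝕜] H) (C : H →L[𝕜] Y) (K : U →L[𝕜] Z)
    (P : H →L[𝕜] H) (s : A.domain × U) : ℝ :=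
  ‖C s.1‖ ^ 2 + ‖K s.2‖ ^ 2 - 2 * re ⟪A s.1 + B s.2, P s.1⟫_𝕜

/-- The functional `(x, u) ↦ ⟨p, Ax + Bu⟩ - ⟨g, x⟩ - ⟨h, u⟩`, which measures by how much `p` fails
to solve the adjoint equations `A*p = g`, `B*p = h`. -/
noncomputable def costateDefect (A : H →ₗ.[𝕜] H) (B : U →L[𝕜] H) (g : H) (h : U) (p : H) :
    A.domain × U →ₗ[𝕜] 𝕜 :=
  innerₛₗ 𝕜 p ∘ₗ A.toFun.coprod (B : U →ₗ[𝕜] H) -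
    (innerₛₗ 𝕜 g ∘ₗ A.domain.subtype).coprod (innerₛₗ 𝕜 h)

theorem costateDefect_apply (g : H) (h : U) (p : H) (s : A.domain × U) :
    costateDefect A B g h p s = ⟪p, A s.1 + B s.2⟫_𝕜 - (⟪g, (s.1 : H)⟫_𝕜 + ⟪h, s.2⟫_𝕜) := rfl

theorem costateDefect_eq_zero_iff [CompleteSpace H] [CompleteSpace U]
    (hA : Dense (A.domain : Set H)) {g : H} {h : U} {p : H} :
    costateDefect A B g h p = 0 ↔
      (∃ hp : p ∈ A.adjoint.domain, A.adjoint ⟨p, hp⟩ = g) ∧ adjoint B p = h := by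
  constructor
  · intro h_zero
    have h_apply (s : A.domain × U) : ⟪p, A s.1 + B s.2⟫_𝕜 = ⟪g, (s.1 : H)⟫_𝕜 + ⟪h, s.2⟫_𝕜 :=
      sub_eq_zero.1 (LinearMap.congr_fun h_zero s)
    have h_state (x : A.domain) : ⟪g, (x : H)⟫_𝕜 = ⟪p, A x⟫_𝕜 := by
      simpa using (h_apply (x, 0)).symm
    have hp : p ∈ A.adjoint.domain := LinearPMap.mem_adjoint_domain_of_exists _ ⟨g, h_state⟩
    refine ⟨⟨hp, LinearPMap.adjoint_apply_eq hA _ h_state⟩, ext_inner_right 𝕜 fun u ↦ ?_⟩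
    simpa [adjoint_inner_left] using h_apply (0, u)
  · rintro ⟨⟨hp, rfl⟩, rfl⟩
    refine LinearMap.ext fun s ↦ ?_
    rw [costateDefect_apply, adjoint_inner_left, LinearPMap.adjoint_isFormalAdjoint hA ⟨p, hp⟩ s.1,
      inner_add_right, sub_self, LinearMap.zero_apply]

theorem dissipationForm_ofReal_smul (P : H →L[𝕜] H) (t : ℝ) (s : A.domain × U) :
    dissipationForm A B C K P ((t : 𝕜) • s) = t ^ 2 * dissipationForm A B C K P s := by
  simp only [dissipationForm, Prod.smul_fst, Prod.smul_snd, A.map_smul, Submodule.coe_smul,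
    map_smul, ← smul_add, inner_smul_left, inner_smul_right, conj_ofReal, re_ofReal_mul, norm_smul,
    norm_ofReal, mul_pow, sq_abs]
  ring

theorem dissipationForm_zero_right (P : H →L[𝕜] H) (x : A.domain) :
    dissipationForm A B C K P (x, 0) = ‖C x‖ ^ 2 - 2 * re ⟪A x, P x⟫_𝕜 := by
  simp [dissipationForm]

theorem apply_one_mul_sq_norm_le_of_le_dissipationForm {P : H →L[𝕜] H} {α : ℝ → ℝ}
    (h : ∀ s : A.domain × U, α ‖(s.1 : H)‖ ≤ dissipationForm A B C K P s) (x : A.domain) :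
    α 1 * ‖(x : H)‖ ^ 2 ≤ ‖C x‖ ^ 2 - 2 * re ⟪A x, P x⟫_𝕜 := by
  rw [← dissipationForm_zero_right (B := B) (K := K)]
  refine apply_one_mul_sq_norm_le_of_homogeneous (𝕜 := 𝕜)
    (q := fun x : A.domain ↦ dissipationForm A B C K P (x, 0)) (fun t x ↦ ?_) (fun x ↦ h (x, 0)) x
  rw [← dissipationForm_ofReal_smul, Prod.smul_mk, smul_zero]

theorem two_mul_re_inner_le_sq_norm_add {cK : ℝ} (hcK : 0 < cK) (hKB : ∀ u, cK * ‖B u‖ ≤ ‖K u‖)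
    (P : H →L[𝕜] H) (u : U) (x : H) :
    2 * re ⟪B u, P x⟫_𝕜 ≤ ‖K u‖ ^ 2 + (‖P‖ / cK) ^ 2 * ‖x‖ ^ 2 := by
  have h_inner : re ⟪B u, P x⟫_𝕜 ≤ ‖K u‖ * (‖P‖ / cK * ‖x‖) :=
    calc re ⟪B u, P x⟫_𝕜 ≤ ‖B u‖ * ‖P x‖ := re_inner_le_norm _ _
      _ ≤ ‖K u‖ / cK * (‖P‖ * ‖x‖) := by
        gcongr
        · exact (le_div_iff₀' hcK).2 (hKB u)
        · exact P.le_opNorm x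
      _ = ‖K u‖ * (‖P‖ / cK * ‖x‖) := by ring
  linarith [two_mul_le_add_sq ‖K u‖ (‖P‖ / cK * ‖x‖), mul_pow (‖P‖ / cK) ‖x‖ 2]

theorem exists_smul_dissipationForm_coercive {cK : ℝ} (hcK : 0 < cK)
    (hKB : ∀ u, cK * ‖B u‖ ≤ ‖K u‖) {Q : H →L[𝕜] H} {m : ℝ} (hm : 0 < m)
    (hQ : ∀ x : A.domain, m * ‖(x : H)‖ ^ 2 ≤ ‖C x‖ ^ 2 - 2 * re ⟪A x, Q x⟫_𝕜) :
    ∃ c : ℝ, 0 < c ∧ ∃ m' : ℝ, 0 < m' ∧ ∀ s : A.domain × U,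
      m' * ‖(s.1 : H)‖ ^ 2 ≤ dissipationForm A B C K ((c : 𝕜) • Q) s := by
  set q : ℝ := ‖Q‖ / cK
  obtain ⟨c, hc, hc1, hcq⟩ : ∃ c : ℝ, 0 < c ∧ c ≤ 1 ∧ c * q ^ 2 ≤ m / 2 := by
    refine ⟨m / (m + 2 * q ^ 2), by positivity, div_le_one_of_le₀ ?_ (by positivity), ?_⟩
    · linarith [sq_nonneg q]
    · rw [div_mul_eq_mul_div, div_le_iff₀ (by positivity)]
      linarith [sq_nonneg m]
  refine ⟨c, hc, c * (m / 2), by positivity, fun ⟨x, u⟩ ↦ ?_⟩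
  have h_mixed := two_mul_re_inner_le_sq_norm_add hcK hKB ((c : 𝕜) • Q) u x
  have h_norm : ‖(c : 𝕜) • Q‖ / cK = c * q := by
    rw [norm_smul, norm_ofReal, abs_of_pos hc, mul_div_assoc]
  have h_split : dissipationForm A B C K ((c : 𝕜) • Q) (x, u) =
      ‖C x‖ ^ 2 - c * (2 * re ⟪A x, Q x⟫_𝕜) +
        (‖K u‖ ^ 2 - 2 * re ⟪B u, ((c : 𝕜) • Q) x⟫_𝕜) := by
    simp only [dissipationForm, smul_apply, inner_add_left, inner_smul_right, map_add,
      re_ofReal_mul]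
    ring
  calc c * (m / 2) * ‖(x : H)‖ ^ 2
      ≤ c * (m - c * q ^ 2) * ‖(x : H)‖ ^ 2 := by gcongr; linarith
    _ = c * (m * ‖(x : H)‖ ^ 2) - (c * q) ^ 2 * ‖(x : H)‖ ^ 2 := by ring
    _ ≤ c * (‖C x‖ ^ 2 - 2 * re ⟪A x, Q x⟫_𝕜) - (c * q) ^ 2 * ‖(x : H)‖ ^ 2 := by
      gcongr; exact hQ x
    _ ≤ dissipationForm A B C K ((c : 𝕜) • Q) (x, u) := by
      rw [h_norm] at h_mixed
      linarith [mul_le_of_le_one_left (sq_nonneg ‖C x‖) hc1]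

variable [CompleteSpace H] [CompleteSpace U] [CompleteSpace Y] [CompleteSpace Z]

theorem ell_add_sub_ell (z : H) (v : U) (xe x : H) (ue u : U) :
    ell C K z v (x + xe) (u + ue) - ell C K z v xe ue =
      ‖C x‖ ^ 2 + ‖K u‖ ^ 2 + 2 * re ⟪z + adjoint C (C xe), x⟫_𝕜 +
        2 * re ⟪v + adjoint K (K ue), u⟫_𝕜 := by
  simp only [ell, map_add, norm_add_sq (𝕜 := 𝕜), inner_add_left, inner_add_right,
    adjoint_inner_left, inner_re_symm (C x), inner_re_symm (K u)]
  ring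

theorem ell_sub_storage_derivative_eq {xe : A.domain} {ue : U} (h_eq : A xe + B ue = 0)
    (z : H) (v : U) (P : H →L[𝕜] H) (w : H) (s : A.domain × U) :
    ell C K z v ((s.1 + xe : A.domain) : H) (s.2 + ue) - ell C K z v xe ue -
        2 * re ⟪A (s.1 + xe) + B (s.2 + ue), P ((s.1 + xe : A.domain) : H) + w⟫_𝕜 =
      dissipationForm A B C K P s -
        2 * re (costateDefect A B (z + adjoint C (C xe)) (v + adjoint K (K ue)) (P xe + w) s) := by
  have h_velocity : A (s.1 + xe) + B (s.2 + ue) = A s.1 + B s.2 := by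
    rw [A.map_add, map_add, add_add_add_comm, h_eq, add_zero]
  rw [h_velocity, Submodule.coe_add, ell_add_sub_ell, map_add, add_assoc (P s.1), inner_add_right,
    costateDefect_apply, dissipationForm, map_sub, map_add, map_add, inner_re_symm (P xe + w)]
  ring

theorem dissipation_inequality_iff {xe : A.domain} {ue : U} (h_eq : A xe + B ue = 0)
    {z : H} {v : U} {P : H →L[𝕜] H} {w : H} {α : ℝ → ℝ} (hα : ∀ s, 0 ≤ s → 0 ≤ α s) :
    (∀ (x : A.domain) (u : U), 2 * re ⟪A x + B u, P x + w⟫_𝕜 ≤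
        ell C K z v x u - ell C K z v xe ue - α ‖(x : H) - xe‖) ↔
      costateDefect A B (z + adjoint C (C xe)) (v + adjoint K (K ue)) (P xe + w) = 0 ∧
        ∀ s : A.domain × U, α ‖(s.1 : H)‖ ≤ dissipationForm A B C K P s := by
  have h_shift := ell_sub_storage_derivative_eq (C := C) (K := K) h_eq z v P w
  set f := costateDefect A B (z + adjoint C (C xe)) (v + adjoint K (K ue)) (P xe + w)
  constructor
  · intro h
    have h_shifted (s : A.domain × U) :
        α ‖(s.1 : H)‖ + 2 * re (f s) ≤ dissipationForm A B C K P s := by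
      have hs := h (s.1 + xe) (s.2 + ue)
      rw [Submodule.coe_add, add_sub_cancel_right, ← Submodule.coe_add] at hs
      linarith [h_shift s]
    have hf : f = 0 := by
      refine linearMap_eq_zero_of_re_le_homogeneous
        (q := fun s ↦ dissipationForm A B C K P s / 2) (fun t s ↦ ?_) fun s ↦ ?_
      · rw [dissipationForm_ofReal_smul, mul_div_assoc]
      · linarith [h_shifted s, hα _ (norm_nonneg (s.1 : H))]
    exact ⟨hf, fun s ↦ by simpa [hf] using h_shifted s⟩
  · rintro ⟨hf, h⟩ x u
    have hs := h (x - xe, u - ue)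
    have h_shift_sub := h_shift (x - xe, u - ue)
    simp only [hf, sub_add_cancel, LinearMap.zero_apply, map_zero] at h_shift_sub
    rw [Submodule.coe_sub] at hs
    linarith

end Dissipation

/-- **Corollary 4.10**: characterization of strict dissipativity at a controlled
equilibrium `(x_e, u_e)` with a quadratic storage function (i.e. strict
pre-dissipativity with a quadratic storage function bounded from below). -/
theorem strict_dissipativity_quadratic_storage_iff
    {𝕜 H U Y Z : Type*} [RCLike 𝕜]
    [NormedAddCommGroup H] [InnerProductSpace 𝕜 H] [CompleteSpace H]
    [NormedAddCommGroup U] [InnerProductSpace 𝕜 U] [CompleteSpace U]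
    [NormedAddCommGroup Y] [InnerProductSpace 𝕜 Y] [CompleteSpace Y]
    [NormedAddCommGroup Z] [InnerProductSpace 𝕜 Z] [CompleteSpace Z]
    (A : H →ₗ.[𝕜] H) (hA : Dense (A.domain : Set H))
    (B : U →L[𝕜] H) (C : H →L[𝕜] Y) (K : U →L[𝕜] Z) (z : H) (v : U)
    (cK : ℝ) (hcK : 0 < cK) (hKB : ∀ u : U, cK * ‖B u‖ ≤ ‖K u‖)
    (xe : H) (ue : U) (hxe : xe ∈ A.domain) (heq : A ⟨xe, hxe⟩ + B ue = 0) :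
    (∃ P : H →L[𝕜] H, IsSelfAdjoint P ∧ ∃ w : H,
      -- the quadratic storage function V_{P,w} is bounded from below
      (∃ cb : ℝ, ∀ x : H, cb ≤ re ⟪P x, x⟫_𝕜 + 2 * re ⟪w, x⟫_𝕜) ∧
      ∃ α : ℝ → ℝ, IsClassK α ∧
        ∀ (x : A.domain) (u : U),
          2 * re ⟪A x + B u, P (x : H) + w⟫_𝕜 ≤
            ell C K z v (x : H) u - ell C K z v xe ue - α ‖(x : H) - xe‖)
    ↔
    (∃ Q : H →L[𝕜] H, IsSelfAdjoint Q ∧ (∀ x : H, 0 ≤ re ⟪Q x, x⟫_𝕜) ∧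
      ∃ m : ℝ, 0 < m ∧
        (∃ w' : H, ∃ hw' : w' ∈ A.adjoint.domain, MemRanSqrt Q w' ∧
          A.adjoint ⟨w', hw'⟩ = z + adjoint C (C xe) ∧
          adjoint B w' = v + adjoint K (K ue)) ∧
        ∀ x : A.domain,
          m * ‖(x : H)‖ ^ 2 ≤ ‖C (x : H)‖ ^ 2 - 2 * re ⟪A x, Q (x : H)⟫_𝕜) := by
  constructor
  · rintro ⟨P, hP, w, hV, α, hα, hdiss⟩
    obtain ⟨hP0, hw⟩ := (quadratic_bddBelow_iff_memRanSqrt hP w).1 hV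
    obtain ⟨hdefect, hform⟩ :=
      (dissipation_inequality_iff (xe := ⟨xe, hxe⟩) heq fun _ ↦ hα.nonneg).1 hdiss
    obtain ⟨⟨hdom, hstate⟩, hcontrol⟩ := (costateDefect_eq_zero_iff hA).1 hdefect
    exact ⟨P, hP, hP0, α 1, hα.pos one_pos, ⟨P xe + w, hdom, hw.apply_add xe, hstate, hcontrol⟩,
      apply_one_mul_sq_norm_le_of_le_dissipationForm hform⟩
  · rintro ⟨Q, hQ, hQ0, m, hm, ⟨p, hdom, hp, hstate, hcontrol⟩, hcoercive⟩
    have hQpos : Q.IsPositive := isPositive_def'.2 ⟨hQ, hQ0⟩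
    obtain ⟨c, hc, m', hm', hform⟩ := exists_smul_dissipationForm_coercive hcK hKB hm hcoercive
    set P : H →L[𝕜] H := (c : 𝕜) • Q
    have hPpos : P.IsPositive := hQpos.smul_of_nonneg (ofReal_nonneg.2 hc.le)
    have hw : MemRanSqrt P (p - P xe) := by
      rw [sub_eq_neg_add, ← map_neg]
      exact (hp.smul_left hQpos hc).apply_add (-xe)
    have hdefect := (costateDefect_eq_zero_iff hA).2 ⟨⟨hdom, hstate⟩, hcontrol⟩
    rw [← add_sub_cancel (P xe) p] at hdefect
    have hα := isClassK_const_mul_sq hm'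
    exact ⟨P, hPpos.isSelfAdjoint, p - P xe,
      (quadratic_bddBelow_iff_memRanSqrt hPpos.isSelfAdjoint _).2 ⟨hPpos.re_inner_nonneg_left, hw⟩,
      _, hα, (dissipation_inequality_iff (xe := ⟨xe, hxe⟩) heq fun _ ↦ hα.nonneg).2
        ⟨hdefect, hform⟩⟩
end

section
/- Strict pre-dissipativity at some equilibrium with some quadratic storage (Corollary 4.11): Assume A is densely defined and closed, K is coercive (there is c > 0 with ‖Ku‖ ≥ c‖u‖ for all u ∈ U), and the range {Ax + Bu : x ∈ dom A, u ∈ U} is closed in H. Then there exist a controlled equilibrium (x_e,u_e), a bounded self-adjoint operator P on H, w ∈ H and α of class 𝒦 such that 2Re⟨Ax + Bu, Px + w⟩ ≤ ℓ(x,u) − ℓ(x_e,u_e) − α(‖x − x_e‖) for all x ∈ dom A, u ∈ U, if and only if there exist a bounded self-adjoint operator Q on H and m > 0 such that ‖Cx‖² − 2Re⟨Ax, Qx⟩ ≥ m‖x‖² for all x ∈ dom A. -/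
open scoped InnerProductSpace
open RCLike ContinuousLinearMap

/-!
The inequality `‖Cx‖² - 2Re⟨Ax, Qx⟩ ≥ m‖x‖²` is homogeneous of degree two, and it says that the
quadratic part of the dissipation inequality is coercive in the state.

*Necessity.* Evaluate the dissipation inequality at `(x_e ± ξ, u_e)` and add: the affine terms
cancel and `α(‖ξ‖) ≤ ‖Cξ‖² - 2Re⟨Aξ, Pξ⟩` remains. By homogeneity `m = α(1)` works.

*Sufficiency.* Scaling `Q` by a small `ε > 0` lets the coercivity of `K` absorb the cross term
`2Re⟨Bu, Qx⟩`, so `‖Cx‖² + ‖Ku‖² - 2Re⟨Ax + Bu, Px⟩ ≥ δ(‖x‖² + ‖u‖²)` with `P = εQ`. On the kernel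
of `[A B]` this makes the quadratic part of `ℓ` coercive, whence `ℓ` has a constrained critical
point `(x_e, u_e)` there. The derivative of `ℓ` at that point annihilates the kernel of `[A B]`; as
`[A B]` has closed range, the derivative has the form `2Re⟨w, Ax + Bu⟩`. This Lagrange multiplier
`w` is the linear part of the storage function, up to the shift by `P x_e`.
-/

theorem exists_antilipschitzWith_of_mul_sq_norm_le {𝕜 E F : Type*} [NormedField 𝕜]
    [NormedAddCommGroup E] [NormedSpace 𝕜 E] [NormedAddCommGroup F] [NormedSpace 𝕜 F]
    (S : E →L[𝕜] F) {m : ℝ} (hm : 0 < m) (hS : ∀ e, m * ‖e‖ ^ 2 ≤ ‖S e‖ ^ 2) :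
    ∃ k, AntilipschitzWith k S := by
  refine ⟨⟨(√m)⁻¹, by positivity⟩, S.antilipschitz_of_bound fun e ↦ ?_⟩
  change ‖e‖ ≤ (√m)⁻¹ * ‖S e‖
  rw [le_inv_mul_iff₀ (Real.sqrt_pos.2 hm)]
  refine le_of_sq_le_sq ?_ (norm_nonneg _)
  rw [mul_pow, Real.sq_sqrt hm.le]
  exact hS e

section ClosedRange

variable {𝕜 E F G : Type*} [RCLike 𝕜]
  [NormedAddCommGroup E] [NormedSpace 𝕜 E] [CompleteSpace E]
  [NormedAddCommGroup F] [InnerProductSpace 𝕜 F]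
  [NormedAddCommGroup G] [InnerProductSpace 𝕜 G]

theorem exists_inner_map_eq_of_ker_le_ker (T : E →L[𝕜] F) (hT : IsComplete (Set.range T))
    (φ : StrongDual 𝕜 E) (hφ : T.ker ≤ φ.ker) : ∃ e₀, ∀ e, ⟪T e₀, T e⟫_𝕜 = φ e := by
  have : CompleteSpace T.range := IsComplete.completeSpace_coe (s := Set.range T) hT
  have hsurj : Function.Surjective T.rangeRestrict := T.toLinearMap.surjective_rangeRestrict
  obtain ⟨s, hs⟩ := T.rangeRestrict.toLinearMap.exists_rightInverse_of_surjective
    (LinearMap.range_eq_top.2 hsurj)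
  have hfactor (e : E) : φ (s (T.rangeRestrict e)) = φ e := by
    rw [← sub_eq_zero, ← map_sub]
    refine hφ (LinearMap.mem_ker.2 ?_)
    rw [map_sub, sub_eq_zero]
    exact congrArg Subtype.val (LinearMap.congr_fun hs (T.rangeRestrict e))
  -- By the open mapping theorem `T` is a quotient map onto its range.
  let ψ : StrongDual 𝕜 T.range :=
    ⟨φ.toLinearMap ∘ₗ s, (T.rangeRestrict.isQuotientMap hsurj).continuous_iff.2 <|
      φ.continuous.congr fun e ↦ (hfactor e).symm⟩
  obtain ⟨e₀, he₀⟩ := hsurj ((InnerProductSpace.toDual 𝕜 T.range).symm ψ)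
  refine ⟨e₀, fun e ↦ ?_⟩
  calc ⟪T e₀, T e⟫_𝕜 = ⟪T.rangeRestrict e₀, T.rangeRestrict e⟫_𝕜 := rfl
    _ = ψ (T.rangeRestrict e) := by rw [he₀, InnerProductSpace.toDual_symm_apply]
    _ = φ e := hfactor e

theorem exists_mem_ker_exists_multiplier (T : E →L[𝕜] G) (hT : IsComplete (Set.range T))
    (S : E →L[𝕜] F) {m : ℝ} (hm : 0 < m) (hS : ∀ e ∈ T.ker, m * ‖e‖ ^ 2 ≤ ‖S e‖ ^ 2)
    (φ : StrongDual 𝕜 E) :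
    ∃ e₀ ∈ T.ker, ∃ w : G, ∀ e, ⟪S e₀, S e⟫_𝕜 + φ e = ⟪w, T e⟫_𝕜 := by
  have : CompleteSpace T.ker := T.isClosed_ker.completeSpace_coe
  obtain ⟨k, hk⟩ := exists_antilipschitzWith_of_mul_sq_norm_le (S ∘L T.ker.subtypeL) hm
    fun n ↦ hS n n.2
  have hinj : (S ∘L T.ker.subtypeL).ker = ⊥ := LinearMap.ker_eq_bot.2 hk.injective
  obtain ⟨n, hn⟩ := exists_inner_map_eq_of_ker_le_ker (S ∘L T.ker.subtypeL)
    (hk.isComplete_range (S ∘L T.ker.subtypeL).uniformContinuous) (φ ∘L T.ker.subtypeL)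
    (hinj ▸ bot_le)
  have hcritical : T.ker ≤ (innerSL 𝕜 (S (-n)) ∘L S + φ).ker := fun e he ↦ by
    have hne : ⟪S n, S e⟫_𝕜 = φ e := hn ⟨e, he⟩
    simp [hne]
  obtain ⟨e₁, he₁⟩ := exists_inner_map_eq_of_ker_le_ker T hT _ hcritical
  exact ⟨-n, T.ker.neg_mem n.2, T e₁, fun e ↦ (he₁ e).symm⟩

end ClosedRange

theorem mul_sq_norm_le_of_forall_norm_eq_one {𝕜 E : Type*} [RCLike 𝕜] [NormedAddCommGroup E]
    [NormedSpace 𝕜 E] {q : E → ℝ} (hq : ∀ (t : ℝ) x, q ((t : 𝕜) • x) = t ^ 2 * q x) {m : ℝ}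
    (h : ∀ x, ‖x‖ = 1 → m ≤ q x) (x : E) : m * ‖x‖ ^ 2 ≤ q x := by
  rcases eq_or_ne x 0 with rfl | hx
  · have hq0 : q 0 = 0 := by simpa using hq 0 0
    simp [hq0]
  · have hx' : 0 < ‖x‖ := norm_pos_iff.2 hx
    have hunit := h _ (norm_smul_inv_norm (𝕜 := 𝕜) hx)
    rw [← ofReal_inv, hq, inv_pow, le_inv_mul_iff₀ (pow_pos hx' 2)] at hunit
    linarith

theorem exists_pos_le_one_exists_pos_mul_sq_add_sq_le {m k : ℝ} (hm : 0 < m) (hk : 0 < k) (b : ℝ) :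
    ∃ ε, 0 < ε ∧ ε ≤ 1 ∧ ∃ δ, 0 < δ ∧
      ∀ r s : ℝ, δ * (r ^ 2 + s ^ 2) ≤ ε * (m * r ^ 2 - 2 * (b * r * s)) + k * s ^ 2 := by
  -- This `ε` is so small that half of each diagonal term suffices to absorb the cross term.
  set ε := m * k / (m * k + 4 * b ^ 2) with hε
  have hε0 : 0 < ε := by positivity
  have hεb : 4 * ε * b ^ 2 ≤ m * k := by
    rw [hε]; field_simp; nlinarith [sq_nonneg b, mul_pos hm hk]
  refine ⟨ε, hε0, ?_, min (ε * m / 2) (k / 2), by positivity, fun r s ↦ ?_⟩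
  · exact div_le_one_of_le₀ (by nlinarith [sq_nonneg b]) (by positivity)
  have hr : min (ε * m / 2) (k / 2) * r ^ 2 ≤ ε * m / 2 * r ^ 2 := by
    gcongr; exact min_le_left _ _
  have hs : min (ε * m / 2) (k / 2) * s ^ 2 ≤ k / 2 * s ^ 2 := by
    gcongr; exact min_le_right _ _
  have hcross : 2 * ε * (b * r * s) ≤ ε * m / 2 * r ^ 2 + k / 2 * s ^ 2 := by
    have hsquare : 0 ≤ ε * (m * r - 2 * b * s) ^ 2 := by positivity
    have hslack : 0 ≤ (m * k - 4 * ε * b ^ 2) * s ^ 2 :=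
      mul_nonneg (sub_nonneg.2 hεb) (sq_nonneg s)
    refine le_of_mul_le_mul_left ?_ hm
    linarith
  linarith

theorem isClassK_const_mul_sq_s7 {δ : ℝ} (hδ : 0 < δ) : IsClassK fun r ↦ δ * r ^ 2 :=
  ⟨by fun_prop, fun _ ha _ _ hab ↦ mul_lt_mul_of_pos_left (pow_lt_pow_left₀ hab ha two_ne_zero) hδ,
    by simp⟩

theorem sq_norm_le_sq_norm_fst_add_sq_norm_snd {E F : Type*} [SeminormedAddGroup E]
    [SeminormedAddGroup F] (p : E × F) : ‖p‖ ^ 2 ≤ ‖p.1‖ ^ 2 + ‖p.2‖ ^ 2 := by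
  rcases max_choice ‖p.1‖ ‖p.2‖ with h | h <;> rw [Prod.norm_def, h]
  · exact le_add_of_nonneg_right (sq_nonneg _)
  · exact le_add_of_nonneg_left (sq_nonneg _)

section Coercivity

variable {𝕜 H U X Y Z : Type*} [RCLike 𝕜]
  [NormedAddCommGroup H] [NormedSpace 𝕜 H] [NormedAddCommGroup U] [NormedSpace 𝕜 U]
  [NormedAddCommGroup Y] [NormedSpace 𝕜 Y] [NormedAddCommGroup Z] [NormedSpace 𝕜 Z]
  [NormedAddCommGroup X]

theorem exists_smul_coercive [InnerProductSpace 𝕜 X] {A : H →ₗ.[𝕜] X} (B : U →L[𝕜] X)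
    {C : H →L[𝕜] Y} {K : U →L[𝕜] Z} {c : ℝ} (hc : 0 < c) (hK : ∀ u, c * ‖u‖ ≤ ‖K u‖)
    {Q : H →L[𝕜] X} {m : ℝ} (hm : 0 < m) (hQ : ∀ x : A.domain,
      m * ‖(x : H)‖ ^ 2 ≤ ‖C (x : H)‖ ^ 2 - 2 * re ⟪A x, Q (x : H)⟫_𝕜) :
    ∃ ε δ : ℝ, 0 < δ ∧ ∀ (x : A.domain) (u : U), δ * (‖(x : H)‖ ^ 2 + ‖u‖ ^ 2) ≤
      ‖C (x : H)‖ ^ 2 + ‖K u‖ ^ 2 - 2 * re ⟪A x + B u, ((ε : 𝕜) • Q) (x : H)⟫_𝕜 := by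
  obtain ⟨ε, hε, hε1, δ, hδ, hbound⟩ :=
    exists_pos_le_one_exists_pos_mul_sq_add_sq_le hm (pow_pos hc 2) (‖B‖ * ‖Q‖)
  refine ⟨ε, δ, hδ, fun x u ↦ ?_⟩
  have hcross : re ⟪B u, Q (x : H)⟫_𝕜 ≤ ‖B‖ * ‖Q‖ * ‖(x : H)‖ * ‖u‖ :=
    calc re ⟪B u, Q (x : H)⟫_𝕜 ≤ ‖B u‖ * ‖Q (x : H)‖ := re_inner_le_norm _ _
      _ ≤ (‖B‖ * ‖u‖) * (‖Q‖ * ‖(x : H)‖) := by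
        gcongr
        exacts [B.le_opNorm u, Q.le_opNorm x]
      _ = ‖B‖ * ‖Q‖ * ‖(x : H)‖ * ‖u‖ := by ring
  have hKsq : c ^ 2 * ‖u‖ ^ 2 ≤ ‖K u‖ ^ 2 := by
    rw [← mul_pow]
    gcongr
    exact hK u
  calc δ * (‖(x : H)‖ ^ 2 + ‖u‖ ^ 2)
      ≤ ε * (m * ‖(x : H)‖ ^ 2 - 2 * (‖B‖ * ‖Q‖ * ‖(x : H)‖ * ‖u‖)) + c ^ 2 * ‖u‖ ^ 2 :=
        hbound _ _
    _ ≤ ε * (‖C (x : H)‖ ^ 2 - 2 * re ⟪A x, Q (x : H)⟫_𝕜 - 2 * re ⟪B u, Q (x : H)⟫_𝕜)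
          + ‖K u‖ ^ 2 := by
        gcongr
        exact hQ x
    _ = ε * ‖C (x : H)‖ ^ 2 + ‖K u‖ ^ 2
          - 2 * re ⟪A x + B u, ((ε : 𝕜) • Q) (x : H)⟫_𝕜 := by
        rw [_root_.smul_apply, inner_smul_right, re_ofReal_mul, inner_add_left, map_add]
        ring
    _ ≤ ‖C (x : H)‖ ^ 2 + ‖K u‖ ^ 2
          - 2 * re ⟪A x + B u, ((ε : 𝕜) • Q) (x : H)⟫_𝕜 := by
        gcongr
        exact mul_le_of_le_one_left (sq_nonneg _) hε1

variable [NormedSpace 𝕜 X]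

/-- The operator `[A B]`, `(x, u) ↦ A x + B u`. It is bounded because the first factor of its domain
is the graph of `A`, i.e. `dom A` with the graph norm. -/
def systemOperator (A : H →ₗ.[𝕜] X) (B : U →L[𝕜] X) : A.graph × U →L[𝕜] X :=
  (ContinuousLinearMap.snd 𝕜 H X ∘L A.graph.subtypeL).coprod B

/-- The operator `(x, u) ↦ (C x, K u)`, whose squared norm is the quadratic part of the stage cost;
its domain is that of `systemOperator`. -/
noncomputable def outputOperator (A : H →ₗ.[𝕜] X) (C : H →L[𝕜] Y) (K : U →L[𝕜] Z) :
    A.graph × U →L[𝕜] WithLp 2 (Y × Z) :=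
  (WithLp.prodContinuousLinearEquiv 2 𝕜 Y Z).symm.toContinuousLinearMap ∘L
    (C ∘L ContinuousLinearMap.fst 𝕜 H X ∘L A.graph.subtypeL).prodMap K

theorem range_systemOperator (A : H →ₗ.[𝕜] X) (B : U →L[𝕜] X) :
    Set.range (systemOperator A B) = {y | ∃ (x : A.domain) (u : U), A x + B u = y} := by
  ext y
  constructor
  · rintro ⟨⟨⟨p, hp⟩, u⟩, rfl⟩
    obtain ⟨x, -, hx⟩ := (LinearPMap.mem_graph_iff A).1 hp
    exact ⟨x, u, congrArg (· + B u) hx⟩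
  · rintro ⟨x, u, rfl⟩
    exact ⟨(⟨(x, A x), A.mem_graph x⟩, u), rfl⟩

theorem mul_sq_norm_le_of_mem_ker_systemOperator {A : H →ₗ.[𝕜] X} {B : U →L[𝕜] X}
    {C : H →L[𝕜] Y} {K : U →L[𝕜] Z} {δ : ℝ} (hδ : 0 ≤ δ)
    (h : ∀ (x : A.domain) (u : U), A x + B u = 0 →
      δ * (‖(x : H)‖ ^ 2 + ‖u‖ ^ 2) ≤ ‖C (x : H)‖ ^ 2 + ‖K u‖ ^ 2) :
    ∀ e ∈ (systemOperator A B).ker,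
      δ / (1 + ‖B‖ ^ 2) * ‖e‖ ^ 2 ≤ ‖outputOperator A C K e‖ ^ 2 := by
  rintro ⟨⟨⟨a, b⟩, hab⟩, u⟩ he
  obtain ⟨x, rfl, rfl⟩ := (LinearPMap.mem_graph_iff A).1 hab
  have hker : A x + B u = 0 := he
  have hAx : ‖A x‖ ≤ ‖B‖ * ‖u‖ := by
    rw [eq_neg_of_add_eq_zero_left hker, norm_neg]
    exact B.le_opNorm u
  have hgraph : ‖((x : H), A x)‖ ^ 2 ≤ ‖(x : H)‖ ^ 2 + ‖B‖ ^ 2 * ‖u‖ ^ 2 :=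
    calc ‖((x : H), A x)‖ ^ 2 ≤ ‖(x : H)‖ ^ 2 + ‖A x‖ ^ 2 :=
          sq_norm_le_sq_norm_fst_add_sq_norm_snd _
      _ ≤ ‖(x : H)‖ ^ 2 + ‖B‖ ^ 2 * ‖u‖ ^ 2 := by rw [← mul_pow]; gcongr
  have hBx : 0 ≤ ‖B‖ ^ 2 * ‖(x : H)‖ ^ 2 := by positivity
  set e : A.graph × U := (⟨((x : H), A x), hab⟩, u)
  have hnorm : ‖e‖ ^ 2 ≤ (1 + ‖B‖ ^ 2) * (‖(x : H)‖ ^ 2 + ‖u‖ ^ 2) :=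
    calc ‖e‖ ^ 2 ≤ ‖((x : H), A x)‖ ^ 2 + ‖u‖ ^ 2 :=
          sq_norm_le_sq_norm_fst_add_sq_norm_snd e
      _ ≤ (1 + ‖B‖ ^ 2) * (‖(x : H)‖ ^ 2 + ‖u‖ ^ 2) := by linarith
  calc δ / (1 + ‖B‖ ^ 2) * ‖e‖ ^ 2
      ≤ δ / (1 + ‖B‖ ^ 2) * ((1 + ‖B‖ ^ 2) * (‖(x : H)‖ ^ 2 + ‖u‖ ^ 2)) := by gcongr
    _ = δ * (‖(x : H)‖ ^ 2 + ‖u‖ ^ 2) := by field_simp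
    _ ≤ ‖C (x : H)‖ ^ 2 + ‖K u‖ ^ 2 := h x u hker
    _ = ‖outputOperator A C K e‖ ^ 2 := by rw [WithLp.prod_norm_sq_eq_of_L2]; rfl

end Coercivity

section LinearQuadratic

variable {𝕜 H U X Y Z : Type*} [RCLike 𝕜]
  [NormedAddCommGroup H] [InnerProductSpace 𝕜 H]
  [NormedAddCommGroup U] [InnerProductSpace 𝕜 U]
  [NormedAddCommGroup X] [InnerProductSpace 𝕜 X]
  [NormedAddCommGroup Y] [InnerProductSpace 𝕜 Y]
  [NormedAddCommGroup Z] [InnerProductSpace 𝕜 Z]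

theorem ell_add_add (C : H →L[𝕜] Y) (K : U →L[𝕜] Z) (z : H) (v : U) (x ξ : H) (u η : U) :
    ell C K z v (x + ξ) (u + η) = ell C K z v x u + (‖C ξ‖ ^ 2 + ‖K η‖ ^ 2)
      + 2 * re (⟪C x, C ξ⟫_𝕜 + ⟪K u, K η⟫_𝕜 + (⟪z, ξ⟫_𝕜 + ⟪v, η⟫_𝕜)) := by
  simp only [ell, map_add, inner_add_right, norm_add_sq (𝕜 := 𝕜)]
  ring

/-- The strict dissipation inequality at `(xe, ue)` for the storage function
`V x = ⟨P x, x⟩ + 2 Re ⟨w, x⟩` and the rate `α`; its left-hand side is the derivative of `V` along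
`ẋ = A x + B u` when `X = H` and `P` is self-adjoint. -/
def StrictDissipationInequality (A : H →ₗ.[𝕜] X) (B : U →L[𝕜] X) (C : H →L[𝕜] Y) (K : U →L[𝕜] Z)
    (z : H) (v : U) (xe : A.domain) (ue : U) (P : H →L[𝕜] X) (w : X) (α : ℝ → ℝ) : Prop :=
  ∀ (x : A.domain) (u : U), 2 * re ⟪A x + B u, P (x : H) + w⟫_𝕜 ≤
    ell C K z v (x : H) u - ell C K z v (xe : H) ue - α ‖(x : H) - (xe : H)‖

/-- The first-order optimality condition for minimizing the stage cost over all `(x, u)` with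
`A x + B u = 0`: the derivative of `ell` at `(xe, ue)` is represented by the multiplier `w`. -/
def IsLagrangeMultiplier (A : H →ₗ.[𝕜] X) (B : U →L[𝕜] X) (C : H →L[𝕜] Y) (K : U →L[𝕜] Z)
    (z : H) (v : U) (xe : A.domain) (ue : U) (w : X) : Prop :=
  ∀ (x : A.domain) (u : U),
    ⟪C (xe : H), C (x : H)⟫_𝕜 + ⟪K ue, K u⟫_𝕜 + (⟪z, (x : H)⟫_𝕜 + ⟪v, u⟫_𝕜) = ⟪w, A x + B u⟫_𝕜

section Necessity

variable {A : H →ₗ.[𝕜] X} {B : U →L[𝕜] X} {C : H →L[𝕜] Y} {K : U →L[𝕜] Z} {z : H} {v : U}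
  {xe : A.domain} {ue : U} {P : H →L[𝕜] X} {w : X} {α : ℝ → ℝ}

theorem StrictDissipationInequality.le_sq_norm_sub_re_inner
    (h : StrictDissipationInequality A B C K z v xe ue P w α) (heq : A xe + B ue = 0)
    (ξ : A.domain) : α ‖(ξ : H)‖ ≤ ‖C (ξ : H)‖ ^ 2 - 2 * re ⟪A ξ, P (ξ : H)⟫_𝕜 := by
  have hshift (ξ : A.domain) : 2 * re ⟪A ξ, P (xe + ξ : H) + w⟫_𝕜 ≤
      ‖C (ξ : H)‖ ^ 2 + 2 * re (⟪C (xe : H), C (ξ : H)⟫_𝕜 + ⟪z, (ξ : H)⟫_𝕜) - α ‖(ξ : H)‖ := by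
    have hξ := h (xe + ξ) (ue + 0)
    rw [LinearPMap.map_add, add_zero, add_right_comm, heq, zero_add, ← add_zero ue,
      Submodule.coe_add, ell_add_add, add_sub_cancel_left] at hξ
    simpa [add_sub_right_comm] using hξ
  have hpos := hshift ξ
  have hneg := hshift (-ξ)
  simp only [Submodule.coe_neg, LinearPMap.map_neg, map_add, map_neg, inner_add_right,
    inner_neg_left, inner_neg_right, norm_neg] at hpos hneg
  linarith

theorem StrictDissipationInequality.mul_sq_norm_le
    (h : StrictDissipationInequality A B C K z v xe ue P w α) (heq : A xe + B ue = 0)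
    (x : A.domain) :
    α 1 * ‖(x : H)‖ ^ 2 ≤ ‖C (x : H)‖ ^ 2 - 2 * re ⟪A x, P (x : H)⟫_𝕜 := by
  refine mul_sq_norm_le_of_forall_norm_eq_one (𝕜 := 𝕜)
    (q := fun x : A.domain ↦ ‖C (x : H)‖ ^ 2 - 2 * re ⟪A x, P (x : H)⟫_𝕜) (fun t x ↦ ?_)
    (fun x hx ↦ ?_) x
  · simp only [LinearPMap.map_smul, Submodule.coe_smul, map_smul, norm_smul, norm_ofReal,
      inner_smul_left, inner_smul_right, conj_ofReal, re_ofReal_mul, mul_pow, sq_abs]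
    ring
  · have hα := h.le_sq_norm_sub_re_inner heq x
    rwa [show ‖(x : H)‖ = 1 from hx] at hα

end Necessity

theorem exists_equilibrium_exists_isLagrangeMultiplier [CompleteSpace H] [CompleteSpace U]
    [CompleteSpace X] {A : H →ₗ.[𝕜] X} (hA : A.IsClosed) {B : U →L[𝕜] X}
    (hran : IsClosed {y : X | ∃ (x : A.domain) (u : U), A x + B u = y})
    {C : H →L[𝕜] Y} {K : U →L[𝕜] Z} (z : H) (v : U) {δ : ℝ} (hδ : 0 < δ)
    (h : ∀ (x : A.domain) (u : U), A x + B u = 0 →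
      δ * (‖(x : H)‖ ^ 2 + ‖u‖ ^ 2) ≤ ‖C (x : H)‖ ^ 2 + ‖K u‖ ^ 2) :
    ∃ (xe : A.domain) (ue : U), A xe + B ue = 0 ∧
      ∃ w, IsLagrangeMultiplier A B C K z v xe ue w := by
  have : CompleteSpace A.graph := IsClosed.completeSpace_coe (hs := hA)
  let φ : StrongDual 𝕜 (A.graph × U) :=
    (innerSL 𝕜 z ∘L ContinuousLinearMap.fst 𝕜 H X ∘L A.graph.subtypeL).coprod (innerSL 𝕜 v)
  rw [← range_systemOperator] at hran
  obtain ⟨⟨⟨⟨a, b⟩, hab⟩, ue⟩, he, w, hw⟩ := exists_mem_ker_exists_multiplier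
    (systemOperator A B) hran.isComplete (outputOperator A C K) (by positivity)
    (mul_sq_norm_le_of_mem_ker_systemOperator hδ.le h) φ
  obtain ⟨xe, rfl, rfl⟩ := (LinearPMap.mem_graph_iff A).1 hab
  refine ⟨xe, ue, he, w, fun x u ↦ ?_⟩
  have hxu := hw (⟨(x, A x), A.mem_graph x⟩, u)
  rwa [WithLp.prod_inner_apply] at hxu

theorem IsLagrangeMultiplier.strictDissipationInequality {A : H →ₗ.[𝕜] X} {B : U →L[𝕜] X}
    {C : H →L[𝕜] Y} {K : U →L[𝕜] Z} {z : H} {v : U} {xe : A.domain} {ue : U} {w : X}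
    (hw : IsLagrangeMultiplier A B C K z v xe ue w) (heq : A xe + B ue = 0) {P : H →L[𝕜] X}
    {δ : ℝ} (hδ : 0 ≤ δ)
    (hP : ∀ (x : A.domain) (u : U), δ * (‖(x : H)‖ ^ 2 + ‖u‖ ^ 2) ≤
      ‖C (x : H)‖ ^ 2 + ‖K u‖ ^ 2 - 2 * re ⟪A x + B u, P (x : H)⟫_𝕜) :
    StrictDissipationInequality A B C K z v xe ue P (w - P xe) fun r ↦ δ * r ^ 2 := by
  intro x u
  obtain ⟨ξ, rfl⟩ : ∃ ξ, x = xe + ξ := ⟨x - xe, by abel⟩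
  obtain ⟨η, rfl⟩ : ∃ η, u = ue + η := ⟨u - ue, by abel⟩
  have hdyn : A (xe + ξ) + B (ue + η) = A ξ + B η := by
    rw [LinearPMap.map_add, map_add, add_add_add_comm, heq, zero_add]
  have hgrad : P ((xe + ξ : A.domain) : H) + (w - P xe) = P ξ + w := by
    rw [Submodule.coe_add, map_add]
    abel
  rw [hdyn, hgrad, Submodule.coe_add, ell_add_add, hw, add_sub_cancel_left, inner_add_right,
    map_add, ← inner_re_symm (𝕜 := 𝕜) w]
  have hη : 0 ≤ δ * ‖η‖ ^ 2 := by positivity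
  linarith [hP ξ η]

theorem strict_predissipativity_some_equilibrium_some_quadratic_storage_iff_general
    [CompleteSpace H] [CompleteSpace U] (A : H →ₗ.[𝕜] H) (hA : A.IsClosed)
    (B : U →L[𝕜] H) (C : H →L[𝕜] Y) (K : U →L[𝕜] Z) (z : H) (v : U)
    {c : ℝ} (hc : 0 < c) (hK : ∀ u, c * ‖u‖ ≤ ‖K u‖)
    (hran : IsClosed {y : H | ∃ (x : A.domain) (u : U), A x + B u = y}) :
    (∃ (xe : H) (ue : U) (hxe : xe ∈ A.domain), A ⟨xe, hxe⟩ + B ue = 0 ∧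
      ∃ P : H →L[𝕜] H, IsSelfAdjoint P ∧ ∃ w : H, ∃ α : ℝ → ℝ, IsClassK α ∧
        StrictDissipationInequality A B C K z v ⟨xe, hxe⟩ ue P w α) ↔
    (∃ Q : H →L[𝕜] H, IsSelfAdjoint Q ∧ ∃ m : ℝ, 0 < m ∧
      ∀ x : A.domain,
        m * ‖(x : H)‖ ^ 2 ≤ ‖C (x : H)‖ ^ 2 - 2 * re ⟪A x, Q (x : H)⟫_𝕜) := by
  constructor
  · rintro ⟨xe, ue, hxe, heq, P, hP, w, α, ⟨-, hmono, hα0⟩, h⟩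
    have hα1 : 0 < α 1 := hα0 ▸ hmono Set.self_mem_Ici (Set.mem_Ici.2 zero_le_one) one_pos
    exact ⟨P, hP, α 1, hα1, h.mul_sq_norm_le heq⟩
  · rintro ⟨Q, hQ, m, hm, h⟩
    obtain ⟨ε, δ, hδ, hcoercive⟩ := exists_smul_coercive B hc hK hm h
    obtain ⟨xe, ue, heq, w, hw⟩ := exists_equilibrium_exists_isLagrangeMultiplier hA hran z v hδ
      fun x u hxu ↦ by simpa [hxu] using hcoercive x u
    have hP : IsSelfAdjoint ((ε : 𝕜) • Q) := IsSelfAdjoint.smul (conj_ofReal ε) hQ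
    exact ⟨xe, ue, xe.2, heq, (ε : 𝕜) • Q, hP, _, _, isClassK_const_mul_sq_s7 hδ,
      hw.strictDissipationInequality heq hδ.le hcoercive⟩

end LinearQuadratic

/-- **Corollary 4.11**: if `A` is densely defined and closed, `K` is coercive and
`ran [A B]` is closed, then strict pre-dissipativity at *some* controlled equilibrium
with *some* quadratic storage function is equivalent to the Lyapunov-like form
inequality for some bounded self-adjoint operator. -/
theorem strict_predissipativity_some_equilibrium_some_quadratic_storage_iff
    {𝕜 H U Y Z : Type*} [RCLike 𝕜]
    [NormedAddCommGroup H] [InnerProductSpace 𝕜 H] [CompleteSpace H]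
    [NormedAddCommGroup U] [InnerProductSpace 𝕜 U] [CompleteSpace U]
    [NormedAddCommGroup Y] [InnerProductSpace 𝕜 Y] [CompleteSpace Y]
    [NormedAddCommGroup Z] [InnerProductSpace 𝕜 Z] [CompleteSpace Z]
    (A : H →ₗ.[𝕜] H) (hA : Dense (A.domain : Set H)) (hAclosed : A.IsClosed)
    (B : U →L[𝕜] H) (C : H →L[𝕜] Y) (K : U →L[𝕜] Z) (z : H) (v : U)
    (c : ℝ) (hc : 0 < c) (hK : ∀ u : U, c * ‖u‖ ≤ ‖K u‖)
    (hran : IsClosed {y : H | ∃ (x : A.domain) (u : U), A x + B u = y}) :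
    (∃ (xe : H) (ue : U) (hxe : xe ∈ A.domain),
      A ⟨xe, hxe⟩ + B ue = 0 ∧
      ∃ P : H →L[𝕜] H, IsSelfAdjoint P ∧ ∃ w : H, ∃ α : ℝ → ℝ, IsClassK α ∧
        ∀ (x : A.domain) (u : U),
          2 * re ⟪A x + B u, P (x : H) + w⟫_𝕜 ≤
            ell C K z v (x : H) u - ell C K z v xe ue - α ‖(x : H) - xe‖)
    ↔
    (∃ Q : H →L[𝕜] H, IsSelfAdjoint Q ∧ ∃ m : ℝ, 0 < m ∧
      ∀ x : A.domain,
        m * ‖(x : H)‖ ^ 2 ≤ ‖C (x : H)‖ ^ 2 - 2 * re ⟪A x, Q (x : H)⟫_𝕜) :=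
  strict_predissipativity_some_equilibrium_some_quadratic_storage_iff_general
    A hAclosed B C K z v hc hK hran
end
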